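/- Let ρ and σ be n×n positive definite complex density matrices and t ∈ [0,1]. Then F_t^spec(ρ,σ) = F_{1-t}^spec(σ,ρ). -/

import Mathlib

/-!
Write `G = ρ⁻¹ ♯ σ`.  The geometric mean `A ♯ B` is the unique positive definite solution `X` of
the Riccati equation `X A⁻¹ X = B` (`msharp_riccati` and `riccati_unique`).  Thus `G ρ G = σ`,
hence `G⁻¹ σ G⁻¹ = ρ`, and uniqueness gives `σ⁻¹ ♯ ρ = G⁻¹` (`msharp_flip`).  By cyclicity of the
trace,
`Tr (σ (G⁻¹)^{2(1-t)}) = Tr (G ρ G G^{2t-2}) = Tr (ρ G^{2t})`.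
The laws of exponents for `mpow` come from identifying it with Mathlib's continuous functional
calculus (`mpow_eq_cfc`).
-/


open Matrix
open scoped ComplexOrder

/-- Real power of a matrix by functional calculus on the eigenvalues
(junk value `0` if the matrix is not Hermitian).  Since eigenvalue powers
are real powers (`Real.rpow`) of real numbers, the conventions `0 ^ 0 = 1`
and `0 ^ s = 0` for `s > 0` hold on positive semidefinite matrices. -/
noncomputable def mpow {n : Type*} [Fintype n] [DecidableEq n]
    (A : Matrix n n ℂ) (r : ℝ) : Matrix n n ℂ :=
  if hA : A.IsHermitian then
    (hA.eigenvectorUnitary : Matrix n n ℂ) *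
      Matrix.diagonal (fun i => ((hA.eigenvalues i ^ r : ℝ) : ℂ)) *
      (star (hA.eigenvectorUnitary : Matrix n n ℂ))
  else 0

/-- The matrix geometric mean `A ♯ B = A^{1/2} (A^{-1/2} B A^{-1/2})^{1/2} A^{1/2}`. -/
noncomputable def msharp {n : Type*} [Fintype n] [DecidableEq n]
    (A B : Matrix n n ℂ) : Matrix n n ℂ :=
  mpow A (1/2) * mpow (mpow A (-(1/2)) * B * mpow A (-(1/2))) (1/2) * mpow A (1/2)

/-- The weighted spectral fidelity `F_t^spec(ρ,σ) = Tr(ρ (ρ⁻¹ ♯ σ)^{2t})`. -/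
noncomputable def specFid {n : Type*} [Fintype n] [DecidableEq n]
    (t : ℝ) (ρ σ : Matrix n n ℂ) : ℂ :=
  Matrix.trace (ρ * mpow (msharp ρ⁻¹ σ) (2 * t))

section

variable {n : Type*} [Fintype n] [DecidableEq n]

lemma mpow_eq_cfc {A : Matrix n n ℂ} (hA : A.IsHermitian) (r : ℝ) :
    mpow A r = cfc (fun x : ℝ => x ^ r) A := by
  rw [hA.cfc_eq, mpow, dif_pos hA, IsHermitian.cfc, Unitary.conjStarAlgAut_apply]
  rfl

lemma spectrum_pos_of_posDef {A : Matrix n n ℂ} (hA : A.PosDef) {x : ℝ}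
    (hx : x ∈ spectrum ℝ A) : 0 < x := by
  rw [hA.1.spectrum_real_eq_range_eigenvalues] at hx
  obtain ⟨i, rfl⟩ := hx
  exact hA.eigenvalues_pos i

/-- The spectrum is finite, so the continuity side conditions of the functional calculus hold for
every function. -/
lemma continuousOn_spectrum {A : Matrix n n ℂ} (hA : A.IsHermitian) (f : ℝ → ℝ) :
    ContinuousOn f (spectrum ℝ A) := by
  rw [hA.spectrum_real_eq_range_eigenvalues]
  exact (Set.finite_range _).continuousOn f

lemma mpow_add {A : Matrix n n ℂ} (hA : A.PosDef) (r s : ℝ) :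
    mpow A (r + s) = mpow A r * mpow A s := by
  rw [mpow_eq_cfc hA.1, mpow_eq_cfc hA.1, mpow_eq_cfc hA.1,
    ← cfc_mul _ _ A (continuousOn_spectrum hA.1 _) (continuousOn_spectrum hA.1 _)]
  exact cfc_congr fun x hx => Real.rpow_add (spectrum_pos_of_posDef hA hx) r s

lemma mpow_zero {A : Matrix n n ℂ} (hA : A.PosDef) : mpow A 0 = 1 := by
  rw [mpow_eq_cfc hA.1]
  simpa using cfc_const_one ℝ A hA.1.isSelfAdjoint

lemma mpow_one {A : Matrix n n ℂ} (hA : A.PosDef) : mpow A 1 = A := by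
  rw [mpow_eq_cfc hA.1]
  simpa using cfc_id' ℝ A hA.1.isSelfAdjoint

lemma mpow_isHermitian {A : Matrix n n ℂ} (hA : A.PosDef) (r : ℝ) :
    (mpow A r).IsHermitian := by
  rw [mpow_eq_cfc hA.1]
  exact cfc_predicate _ A

lemma mpow_mul_neg {A : Matrix n n ℂ} (hA : A.PosDef) (r : ℝ) :
    mpow A r * mpow A (-r) = 1 := by
  rw [← mpow_add hA, add_neg_cancel, mpow_zero hA]

lemma mpow_neg_mul {A : Matrix n n ℂ} (hA : A.PosDef) (r : ℝ) :
    mpow A (-r) * mpow A r = 1 := by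
  rw [← mpow_add hA, neg_add_cancel, mpow_zero hA]

lemma mpow_isUnit {A : Matrix n n ℂ} (hA : A.PosDef) (r : ℝ) : IsUnit (mpow A r) :=
  ⟨⟨_, _, mpow_mul_neg hA r, mpow_neg_mul hA r⟩, rfl⟩

lemma posDef_conj {B S : Matrix n n ℂ} (hB : B.PosDef) (hS : S.IsHermitian) (hu : IsUnit S) :
    (S * B * S).PosDef := by
  have := hB.conjTranspose_mul_mul_same (B := S) (mulVec_injective_iff_isUnit.2 hu)
  rwa [hS.eq] at this

lemma mpow_posDef {A : Matrix n n ℂ} (hA : A.PosDef) (r : ℝ) : (mpow A r).PosDef := by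
  have h := posDef_conj (PosDef.one (n := n) (R := ℂ)) (mpow_isHermitian hA (r / 2))
    (mpow_isUnit hA (r / 2))
  rwa [mul_one, ← mpow_add hA, add_halves] at h

lemma mpow_mpow {A : Matrix n n ℂ} (hA : A.PosDef) (r s : ℝ) :
    mpow (mpow A r) s = mpow A (r * s) := by
  rw [mpow_eq_cfc (mpow_isHermitian hA r), mpow_eq_cfc hA.1, mpow_eq_cfc hA.1,
    ← cfc_comp' (fun x : ℝ => x ^ s) (fun x : ℝ => x ^ r) A ?_ (continuousOn_spectrum hA.1 _)
      hA.1.isSelfAdjoint]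
  · exact cfc_congr fun x hx => (Real.rpow_mul (spectrum_pos_of_posDef hA hx).le r s).symm
  · rw [hA.1.spectrum_real_eq_range_eigenvalues]
    exact ((Set.finite_range _).image _).continuousOn _

lemma mpow_neg_one {A : Matrix n n ℂ} (hA : A.PosDef) : mpow A (-1) = A⁻¹ := by
  have h := mpow_neg_mul hA 1
  rw [mpow_one hA] at h
  exact (inv_eq_left_inv h).symm

lemma mpow_half_mul_self {A : Matrix n n ℂ} (hA : A.PosDef) :
    mpow A (1 / 2) * mpow A (1 / 2) = A := by
  rw [← mpow_add hA, add_halves, mpow_one hA]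

/-- A positive definite matrix is recovered from its square by the power `1 / 2`. -/
lemma sq_inj_of_posDef {X Y : Matrix n n ℂ} (hX : X.PosDef) (hY : Y.PosDef)
    (h : X * X = Y * Y) : X = Y := by
  have key : ∀ {Z : Matrix n n ℂ}, Z.PosDef → mpow (Z * Z) (1 / 2) = Z := fun {Z} hZ => by
    have h2 : Z * Z = mpow Z 2 := by
      rw [← one_add_one_eq_two, mpow_add hZ, mpow_one hZ]
    rw [h2, mpow_mpow hZ, mul_one_div_cancel two_ne_zero, mpow_one hZ]
  rw [← key hX, h, key hY]

lemma msharp_posDef {A B : Matrix n n ℂ} (hA : A.PosDef) (hB : B.PosDef) :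
    (msharp A B).PosDef :=
  posDef_conj (mpow_posDef (posDef_conj hB (mpow_isHermitian hA _) (mpow_isUnit hA _)) _)
    (mpow_isHermitian hA _) (mpow_isUnit hA _)

/-- The geometric mean `X = A ♯ B` solves the Riccati equation `X A⁻¹ X = B`. -/
lemma msharp_riccati {A B : Matrix n n ℂ} (hA : A.PosDef) (hB : B.PosDef) :
    msharp A B * A⁻¹ * msharp A B = B := by
  have hM := mpow_half_mul_self
    (posDef_conj hB (mpow_isHermitian hA (-(1 / 2))) (mpow_isUnit hA (-(1 / 2))))
  have hinv : A⁻¹ = mpow A (-(1 / 2)) * mpow A (-(1 / 2)) := by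
    rw [← mpow_add hA, ← mpow_neg_one hA]; norm_num
  have hab := mpow_mul_neg hA (1 / 2)
  have hba := mpow_neg_mul hA (1 / 2)
  rw [msharp, hinv]
  set a := mpow A (1 / 2)
  set b := mpow A (-(1 / 2))
  set m := mpow (b * B * b) (1 / 2)
  calc a * m * a * (b * b) * (a * m * a)
      = a * m * (a * b) * (b * a) * m * a := by simp only [mul_assoc]
    _ = a * (m * m) * a := by rw [hab, hba]; simp only [mul_assoc, one_mul]
    _ = (a * b) * B * (b * a) := by rw [hM]; simp only [mul_assoc]
    _ = B := by rw [hab, hba, one_mul, mul_one]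

/-- The Riccati equation has at most one positive definite solution: conjugating by `C^{1/2}`
turns it into uniqueness of positive definite square roots. -/
lemma riccati_unique {C X Y : Matrix n n ℂ} (hC : C.PosDef) (hX : X.PosDef) (hY : Y.PosDef)
    (h : X * C * X = Y * C * Y) : X = Y := by
  have hs := mpow_isHermitian hC (1 / 2)
  have hu := mpow_isUnit hC (1 / 2)
  have hsq := mpow_half_mul_self hC
  set s := mpow C (1 / 2)
  have key : ∀ Z : Matrix n n ℂ, (s * Z * s) * (s * Z * s) = s * (Z * C * Z) * s := fun Z => by
    rw [← hsq]; simp only [mul_assoc]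
  have heq : s * X * s = s * Y * s :=
    sq_inj_of_posDef (posDef_conj hX hs hu) (posDef_conj hY hs hu) (by rw [key, key, h])
  exact hu.mul_left_cancel (hu.mul_right_cancel heq)

lemma msharp_flip {ρ σ : Matrix n n ℂ} (hρ : ρ.PosDef) (hσ : σ.PosDef) :
    msharp σ⁻¹ ρ = (msharp ρ⁻¹ σ)⁻¹ := by
  have hG := msharp_posDef hρ.inv hσ
  have h1 := msharp_riccati hρ.inv hσ
  have h2 := msharp_riccati hσ.inv hρ
  have hdρ := (isUnit_iff_isUnit_det _).1 hρ.isUnit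
  have hdσ := (isUnit_iff_isUnit_det _).1 hσ.isUnit
  have hdG := (isUnit_iff_isUnit_det _).1 hG.isUnit
  rw [nonsing_inv_nonsing_inv _ hdρ] at h1
  rw [nonsing_inv_nonsing_inv _ hdσ] at h2
  refine riccati_unique hσ (msharp_posDef hσ.inv hρ) hG.inv (h2.trans ?_)
  set G := msharp ρ⁻¹ σ
  calc ρ = (G⁻¹ * G) * ρ * (G * G⁻¹) := by
        rw [nonsing_inv_mul _ hdG, mul_nonsing_inv _ hdG, one_mul, mul_one]
    _ = G⁻¹ * (G * ρ * G) * G⁻¹ := by simp only [mul_assoc]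
    _ = G⁻¹ * σ * G⁻¹ := by rw [h1]

end

/-- Flip symmetry of the weighted spectral fidelity:
`F_t^spec(ρ,σ) = F_{1-t}^spec(σ,ρ)`. -/
theorem specFid_flip {n : Type*} [Fintype n] [DecidableEq n]
    (ρ σ : Matrix n n ℂ) (hρ : ρ.PosDef) (hσ : σ.PosDef)
    (hρ1 : ρ.trace = 1) (hσ1 : σ.trace = 1)
    (t : ℝ) (ht : t ∈ Set.Icc (0 : ℝ) 1) :
    specFid t ρ σ = specFid (1 - t) σ ρ := by
  have hG := msharp_posDef hρ.inv hσ
  have h1 := msharp_riccati hρ.inv hσ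
  rw [nonsing_inv_nonsing_inv _ ((isUnit_iff_isUnit_det _).1 hρ.isUnit)] at h1
  rw [specFid, specFid, msharp_flip hρ hσ]
  set G := msharp ρ⁻¹ σ
  have hpow : G * mpow G (-1 * (2 * (1 - t))) * G = mpow G (2 * t) := by
    calc G * mpow G (-1 * (2 * (1 - t))) * G
        = mpow G 1 * mpow G (-1 * (2 * (1 - t))) * mpow G 1 := by rw [mpow_one hG]
      _ = mpow G (2 * t) := by
        rw [← mpow_add hG, ← mpow_add hG]
        congr 1
        ring
  rw [← mpow_neg_one hG, mpow_mpow hG, ← hpow]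
  calc (ρ * (G * mpow G (-1 * (2 * (1 - t))) * G)).trace
      = ((ρ * G * mpow G (-1 * (2 * (1 - t)))) * G).trace := by simp only [mul_assoc]
    _ = ((G * ρ * G) * mpow G (-1 * (2 * (1 - t)))).trace := by
        rw [trace_mul_comm]; simp only [mul_assoc]
    _ = (σ * mpow G (-1 * (2 * (1 - t)))).trace := by rw [h1]
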